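/- Let γ ∈ (0,1] and A, D > 0. There is a constant C depending only on γ with the following property. Let h > 0, T = [0,h]³, and let T = T⁻ ∪ T⁺ be a partition of T into two disjoint Lebesgue-measurable sets. Fix F ∈ ℝ³, a unit vector n̄, and 0 < β⁻ ≤ β⁺, and suppose there exists a tetrahedron P with vol(P) ≥ γh³ and F ∈ closure(P) such that either P ⊆ T⁻ or P ⊆ T⁺. Let S_Γ ⊆ T be an H²-measurable set with H²(S_Γ) ≤ A h² and |(X − F)·n̄| ≤ D h² for every X ∈ S_Γ. Then for every p ∈ Q₁, writing q = C_T(p), the jump q − p satisfies ( ∫_{S_Γ} (q − p)² dH² )^{1/2} ≤ C √A D (√β⁺/β⁻) h^{3/2} ( β⁻ ‖∇p‖²_{L²(T⁻)} + β⁺ ‖∇q‖²_{L²(T⁺)} )^{1/2}. (This is the interface-jump trace bound of Theorem 4.7, ‖[φ_T]‖_{L²(T∩Γ)} ≤ C (√β⁺/β⁻) h^{3/2} ‖√β ∇φ_T‖_{L²(T)}, with the geometric conclusions of Lemmas 2.3 and 4.6—area of Γ∩T of order h² and distance to the approximating plane of order h²—taken as hypotheses on S_Γ.) -/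

import Mathlib

/-!
The jump `q - p` equals `(β⁻/β⁺ - 1) g L` with `g = ∇p(F)·n̄`, so the area of `S_Γ` and the bound
`|L| ≤ D h²` on it give `‖q - p‖² ≤ g² D² A h⁶`. It remains to control `g² h³` by the energy.

For this, let `u = ∂_n̄ p` (if `P ⊆ T⁻`) or `u = ∂_n̄ q` (if `P ⊆ T⁺`); in the second case
`∂_n̄ q(F) = (β⁻/β⁺) g`. Since `u` has total degree at most two, its restriction to each line through
`F` is reproduced at `F` by quadratic extrapolation (`IsQ1.extrapolation`):
`u(F) = 3 u(F + (X-F)/3) - 3 u(F + 2(X-F)/3) + u(X)`. As `P` is convex and contains `F`, the three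
nodes stay in `P` when `X ∈ P`. Squaring, integrating over `X ∈ P` and changing variables by the
homotheties of centre `F` yields `u(F)² |P| ≤ 900 ∫_P u²` (`extrapolation_bound`), without any
compactness or scaling argument. With `|P| ≥ γ h³` and `β⁻ ≤ β⁺` this gives the claim with
`C = √(900/γ)`.
-/

open MeasureTheory
open scoped RealInnerProductSpace ENNReal

noncomputable section

abbrev V3 : Type := EuclideanSpace ℝ (Fin 3)

/-- `Q₁`: the space of trilinear polynomials on `ℝ³`. -/
def IsQ1 (p : V3 → ℝ) : Prop :=
  ∃ a₀ a₁ a₂ a₃ a₄ a₅ a₆ a₇ : ℝ, ∀ x : V3,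
    p x = a₀ + a₁ * x 0 + a₂ * x 1 + a₃ * x 2
      + a₄ * (x 0 * x 1) + a₅ * (x 0 * x 2) + a₆ * (x 1 * x 2)
      + a₇ * (x 0 * x 1 * x 2)

/-- The cube `T = [0,h]³`. -/
def cube (h : ℝ) : Set V3 := {X | ∀ i, X i ∈ Set.Icc (0:ℝ) h}

/-- `P` is a tetrahedron: the convex hull of four affinely independent points. -/
def IsTetra (P : Set V3) : Prop :=
  ∃ v : Fin 4 → V3, AffineIndependent ℝ v ∧ P = convexHull ℝ (Set.range v)

/-- The extension operator `C_T(p) = p + (β⁻/β⁺ − 1)(∇p(F)·n̄) L`, `L(X) = (X−F)·n̄`. -/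
def CT (βm βp : ℝ) (F nbar : V3) (p : V3 → ℝ) : V3 → ℝ :=
  fun X => p X + (βm / βp - 1) * (fderiv ℝ p F nbar) * ⟪X - F, nbar⟫

/-- `f` is a closed face of the cube `[0,h]³` with unit normal `nf`. -/
def IsFace (h : ℝ) (f : Set V3) (nf : V3) : Prop :=
  ∃ i : Fin 3, (nf = EuclideanSpace.single i 1 ∨ nf = -EuclideanSpace.single i 1) ∧
    (f = {X ∈ cube h | X i = 0} ∨ f = {X ∈ cube h | X i = h})

/-- The directional derivative is spelled out because its total degree, at most two in the base
point, is what makes quadratic extrapolation exact. -/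
lemma IsQ1.hasFDerivAt {p : V3 → ℝ} (hp : IsQ1 p) :
    ∃ a₁ a₂ a₃ a₄ a₅ a₆ a₇ : ℝ, ∃ p' : V3 → V3 →L[ℝ] ℝ, Continuous p' ∧
      (∀ x, HasFDerivAt p (p' x) x) ∧
      ∀ x n : V3, p' x n = a₁ * n 0 + a₂ * n 1 + a₃ * n 2
        + a₄ * (x 0 * n 1 + x 1 * n 0) + a₅ * (x 0 * n 2 + x 2 * n 0)
        + a₆ * (x 1 * n 2 + x 2 * n 1)
        + a₇ * (x 0 * x 1 * n 2 + x 2 * (x 0 * n 1 + x 1 * n 0)) := by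
  obtain ⟨a₀, a₁, a₂, a₃, a₄, a₅, a₆, a₇, h⟩ := hp
  have hpr : ∀ (i : Fin 3) (x : V3), HasFDerivAt (fun y : V3 => y i)
      (EuclideanSpace.proj i : V3 →L[ℝ] ℝ) x := fun i x =>
    (EuclideanSpace.proj i : V3 →L[ℝ] ℝ).hasFDerivAt
  have hfun : p = fun x : V3 => a₀ + a₁ * x 0 + a₂ * x 1 + a₃ * x 2
      + a₄ * (x 0 * x 1) + a₅ * (x 0 * x 2) + a₆ * (x 1 * x 2)
      + a₇ * (x 0 * x 1 * x 2) := funext h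
  refine ⟨a₁, a₂, a₃, a₄, a₅, a₆, a₇, fun x =>
    (a₁ + a₄ * x 1 + a₅ * x 2 + a₇ * (x 1 * x 2)) • (EuclideanSpace.proj 0 : V3 →L[ℝ] ℝ)
      + (a₂ + a₄ * x 0 + a₆ * x 2 + a₇ * (x 0 * x 2)) • (EuclideanSpace.proj 1 : V3 →L[ℝ] ℝ)
      + (a₃ + a₅ * x 0 + a₆ * x 1 + a₇ * (x 0 * x 1)) • (EuclideanSpace.proj 2 : V3 →L[ℝ] ℝ),
    by fun_prop, fun x => ?_, fun x n => ?_⟩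
  · rw [hfun]
    refine HasFDerivAt.congr_fderiv ((((((((hpr 0 x).const_mul a₁).const_add a₀).add
      ((hpr 1 x).const_mul a₂)).add ((hpr 2 x).const_mul a₃)).add (((hpr 0 x).mul (hpr 1 x)).const_mul a₄)).add
      (((hpr 0 x).mul (hpr 2 x)).const_mul a₅)).add
      (((hpr 1 x).mul (hpr 2 x)).const_mul a₆) |>.add
      ((((hpr 0 x).mul (hpr 1 x)).mul (hpr 2 x)).const_mul a₇)) ?_
    ext n
    simp
    ring
  · simp
    ring

lemma IsQ1.differentiable {p : V3 → ℝ} (hp : IsQ1 p) : Differentiable ℝ p := by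
  obtain ⟨_, _, _, _, _, _, _, p', -, h, -⟩ := hp.hasFDerivAt
  exact fun x => (h x).differentiableAt

lemma IsQ1.continuous_fderiv {p : V3 → ℝ} (hp : IsQ1 p) : Continuous (fderiv ℝ p) := by
  obtain ⟨_, _, _, _, _, _, _, p', hc, h, -⟩ := hp.hasFDerivAt
  rwa [show fderiv ℝ p = p' from funext fun x => (h x).fderiv]

/-- Directional derivatives of a trilinear polynomial are quadratic along every line, hence
reproduced at `F` by quadratic extrapolation from the nodes `1/3`, `2/3`, `1`. -/
lemma IsQ1.extrapolation {p : V3 → ℝ} (hp : IsQ1 p) (n F X : V3) :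
    fderiv ℝ p F n = 3 * fderiv ℝ p (F + (1 / 3 : ℝ) • (X - F)) n
      - 3 * fderiv ℝ p (F + (2 / 3 : ℝ) • (X - F)) n
      + fderiv ℝ p (F + (1 : ℝ) • (X - F)) n := by
  obtain ⟨_, _, _, _, _, _, _, p', -, h, hf⟩ := hp.hasFDerivAt
  rw [show fderiv ℝ p = p' from funext fun x => (h x).fderiv]
  simp only [hf, PiLp.add_apply, PiLp.smul_apply, PiLp.sub_apply, smul_eq_mul]
  ring

lemma integrable_comp_homothety {G : V3 → ℝ} (hG : Integrable G) (F : V3) {t : ℝ} (ht : t ≠ 0) :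
    Integrable fun X => G (F + t • (X - F)) :=
  ((hG.comp_add_left F).comp_smul ht).comp_sub_right F

lemma integral_comp_homothety (G : V3 → ℝ) (F : V3) {t : ℝ} (ht : 0 < t) :
    ∫ X, G (F + t • (X - F)) = (t ^ 3)⁻¹ * ∫ X, G X := by
  rw [integral_sub_right_eq_self (fun X => G (F + t • X)) F,
    Measure.integral_comp_smul volume (fun X => G (F + X)) t, integral_add_left_eq_self G F]
  simp [abs_of_pos ht]

/-- Mean-square control of the value at a point `F` of a convex compact set `P`, for a function
reproduced at `F` by quadratic extrapolation along lines. -/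
lemma extrapolation_bound {P : Set V3} (hP : Convex ℝ P) (hc : IsCompact P) {F : V3} (hF : F ∈ P)
    {u : V3 → ℝ} (hu : Continuous u)
    (hex : ∀ X, u F = 3 * u (F + (1 / 3 : ℝ) • (X - F)) - 3 * u (F + (2 / 3 : ℝ) • (X - F))
      + u (F + (1 : ℝ) • (X - F))) :
    u F ^ 2 * volume.real P ≤ 900 * ∫ X in P, u X ^ 2 := by
  have hm := hc.measurableSet
  set G : V3 → ℝ := P.indicator fun X => u X ^ 2 with hGdef
  have hGi : Integrable G :=
    ((hu.pow 2).continuousOn.integrableOn_compact hc).integrable_indicator hm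
  have hG0 : ∀ X, 0 ≤ G X := fun X => Set.indicator_nonneg (fun _ _ => sq_nonneg _) X
  have hGu : ∀ t : ℝ, 0 ≤ t → t ≤ 1 → ∀ X ∈ P,
      G (F + t • (X - F)) = u (F + t • (X - F)) ^ 2 := fun t h0 h1 X hX =>
    Set.indicator_of_mem (hP.add_smul_sub_mem hF hX ⟨h0, h1⟩) _
  have hi : ∀ t : ℝ, t ≠ 0 → ∀ c : ℝ, Integrable fun X => c * G (F + t • (X - F)) :=
    fun t ht c => (integrable_comp_homothety hGi F ht).const_mul c
  -- The comparison holds on all of space because `G ≥ 0` vanishes outside `P`.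
  have hpt : ∀ X, P.indicator (fun _ => u F ^ 2) X ≤
      27 * G (F + (1 / 3 : ℝ) • (X - F)) + 27 * G (F + (2 / 3 : ℝ) • (X - F))
        + 3 * G (F + (1 : ℝ) • (X - F)) := by
    intro X
    by_cases hX : X ∈ P
    · rw [Set.indicator_of_mem hX, hGu _ (by norm_num) (by norm_num) X hX,
        hGu _ (by norm_num) (by norm_num) X hX, hGu _ (by norm_num) (by norm_num) X hX, hex X]
      set a := u (F + (1 / 3 : ℝ) • (X - F))
      set b := u (F + (2 / 3 : ℝ) • (X - F))
      set c := u (F + (1 : ℝ) • (X - F))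
      nlinarith [sq_nonneg (3 * a + 3 * b), sq_nonneg (3 * a - c), sq_nonneg (3 * b + c)]
    · rw [Set.indicator_of_notMem hX]
      have h1 := hG0 (F + (1 / 3 : ℝ) • (X - F))
      have h2 := hG0 (F + (2 / 3 : ℝ) • (X - F))
      have h3 := hG0 (F + (1 : ℝ) • (X - F))
      positivity
  have hint := integral_mono
    ((integrable_indicator_iff hm).2 (integrableOn_const (C := u F ^ 2) hc.measure_lt_top.ne))
    (((hi (1 / 3) (by norm_num) 27).add (hi (2 / 3) (by norm_num) 27)).add
      (hi 1 (by norm_num) 3)) hpt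
  have hs : ∫ X, G X = ∫ X in P, u X ^ 2 := integral_indicator hm
  have hn : 0 ≤ ∫ X, G X := integral_nonneg hG0
  rw [integral_indicator hm, setIntegral_const,
    integral_add' ((hi (1 / 3) (by norm_num) 27).add (hi (2 / 3) (by norm_num) 27))
      (hi 1 (by norm_num) 3),
    integral_add' (hi (1 / 3) (by norm_num) 27) (hi (2 / 3) (by norm_num) 27),
    integral_const_mul, integral_const_mul, integral_const_mul,
    integral_comp_homothety G F (by norm_num), integral_comp_homothety G F (by norm_num),
    integral_comp_homothety G F (by norm_num), smul_eq_mul] at hint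
  rw [← hs]
  norm_num at hint
  linarith

lemma isCompact_cube (h : ℝ) : IsCompact (cube h) := by
  have : cube h = (EuclideanSpace.equiv (Fin 3) ℝ).symm ''
      (Set.univ.pi fun _ => Set.Icc (0 : ℝ) h) := by
    ext X
    constructor
    · intro hX
      exact ⟨EuclideanSpace.equiv (Fin 3) ℝ X, fun i _ => hX i, by simp⟩
    · rintro ⟨Y, hY, rfl⟩ i
      exact hY i trivial
  rw [this]
  exact (isCompact_univ_pi fun _ => isCompact_Icc).image
    (EuclideanSpace.equiv (Fin 3) ℝ).symm.continuous

/-- The inverse-type estimate for the normal derivative at `F`, with the energy taken over any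
part `S` of the cube that contains the tetrahedron. -/
lemma IsQ1.normal_deriv_sq_le {p : V3 → ℝ} (hp : IsQ1 p) {n : V3} (hn : ‖n‖ = 1)
    {γ h : ℝ} {S P : Set V3} (hSc : S ⊆ cube h) (hP : IsTetra P)
    (hPS : P ⊆ S) (hvol : ENNReal.ofReal (γ * h ^ 3) ≤ volume P) {F : V3} (hF : F ∈ closure P) :
    (fderiv ℝ p F n) ^ 2 * (γ * h ^ 3) ≤ 900 * ∫ X in S, ‖fderiv ℝ p X‖ ^ 2 := by
  obtain ⟨v, -, rfl⟩ := hP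
  have hc : IsCompact (convexHull ℝ (Set.range v)) := (Set.finite_range v).isCompact_convexHull (𝕜 := ℝ)
  rw [hc.isClosed.closure_eq] at hF
  have hfc := hp.continuous_fderiv
  have hu : Continuous fun X => fderiv ℝ p X n := hfc.clm_apply continuous_const
  have key := extrapolation_bound (convex_convexHull ℝ _) hc hF hu
    fun X => hp.extrapolation n F X
  have hint : IntegrableOn (fun X => ‖fderiv ℝ p X‖ ^ 2) S :=
    ((hfc.norm.pow 2).continuousOn.integrableOn_compact (isCompact_cube h)).mono_set hSc
  have hv : γ * h ^ 3 ≤ volume.real (convexHull ℝ (Set.range v)) :=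
    (ENNReal.ofReal_le_iff_le_toReal hc.measure_lt_top.ne).1 hvol
  calc (fderiv ℝ p F n) ^ 2 * (γ * h ^ 3)
      ≤ (fderiv ℝ p F n) ^ 2 * volume.real (convexHull ℝ (Set.range v)) := by gcongr
    _ ≤ 900 * ∫ X in convexHull ℝ (Set.range v), (fderiv ℝ p X n) ^ 2 := key
    _ ≤ 900 * ∫ X in convexHull ℝ (Set.range v), ‖fderiv ℝ p X‖ ^ 2 := by
        refine mul_le_mul_of_nonneg_left (setIntegral_mono
          ((hu.pow 2).continuousOn.integrableOn_compact hc) (hint.mono_set hPS) fun X => ?_)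
          (by norm_num)
        have := (fderiv ℝ p X).le_opNorm n
        rw [hn, mul_one, Real.norm_eq_abs] at this
        exact sq_le_sq' (abs_le.1 this).1 (abs_le.1 this).2
    _ ≤ 900 * ∫ X in S, ‖fderiv ℝ p X‖ ^ 2 := by
        refine mul_le_mul_of_nonneg_left (setIntegral_mono_set hint ?_ ?_) (by norm_num)
        · exact Filter.Eventually.of_forall fun X => sq_nonneg _
        · exact hPS.eventuallyLE

lemma IsQ1.CT {p : V3 → ℝ} (hp : IsQ1 p) (βm βp : ℝ) (F n : V3) : IsQ1 (CT βm βp F n p) := by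
  obtain ⟨a₀, a₁, a₂, a₃, a₄, a₅, a₆, a₇, h⟩ := hp
  set k := (βm / βp - 1) * fderiv ℝ p F n with hk
  refine ⟨a₀ - k * (F 0 * n 0 + F 1 * n 1 + F 2 * n 2), a₁ + k * n 0, a₂ + k * n 1, a₃ + k * n 2,
    a₄, a₅, a₆, a₇, fun x => ?_⟩
  rw [_root_.CT, ← hk, h x]
  simp only [PiLp.inner_apply, Fin.sum_univ_three, PiLp.sub_apply, RCLike.inner_apply, conj_trivial]
  ring

lemma fderiv_CT_apply {p : V3 → ℝ} (hp : Differentiable ℝ p) (βm βp : ℝ) (F : V3) {n : V3}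
    (hn : ‖n‖ = 1) : fderiv ℝ (CT βm βp F n p) F n = βm / βp * fderiv ℝ p F n := by
  have hL : HasFDerivAt (fun X : V3 => ⟪X - F, n⟫) (innerSL ℝ n) F := by
    have : (fun X : V3 => ⟪X - F, n⟫) = fun X => innerSL ℝ n (X - F) := by
      funext X
      rw [innerSL_apply_apply, real_inner_comm]
    rw [this]
    exact (innerSL ℝ n).hasFDerivAt.comp F ((hasFDerivAt_id F).sub_const F)
  have h := (hp F).hasFDerivAt.add (hL.const_mul ((βm / βp - 1) * fderiv ℝ p F n))
  have h' : fderiv ℝ (CT βm βp F n p) F = _ := h.fderiv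
  rw [h']
  simp [hn]
  ring

/-- Interface-jump trace bound of Theorem 4.7:
`‖[φ_T]‖_{L²(T∩Γ)} ≤ C (√β⁺/β⁻) h^{3/2} ‖√β ∇φ_T‖_{L²(T)}`, where the geometric conclusions
of Lemmas 2.3 and 4.6 (area of `Γ∩T` of order `h²`, distance to the approximating plane of
order `h²`) are taken as hypotheses on the set `S_Γ`. -/
theorem interface_jump_bound (γ : ℝ) (hγ0 : 0 < γ) (hγ1 : γ ≤ 1) :
    ∃ C : ℝ, 0 < C ∧
      ∀ (A D : ℝ), 0 < A → 0 < D →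
      ∀ (h : ℝ), 0 < h →
      ∀ (Tm Tp : Set V3), MeasurableSet Tm → MeasurableSet Tp →
        Disjoint Tm Tp → Tm ∪ Tp = cube h →
      ∀ (F nbar : V3), ‖nbar‖ = 1 →
      ∀ (βm βp : ℝ), 0 < βm → βm ≤ βp →
      (∃ P : Set V3, IsTetra P ∧ (P ⊆ Tm ∨ P ⊆ Tp) ∧
          ENNReal.ofReal (γ * h ^ 3) ≤ volume P ∧ F ∈ closure P) →
      ∀ SΓ : Set V3, MeasurableSet SΓ → SΓ ⊆ cube h →
        μH[2] SΓ ≤ ENNReal.ofReal (A * h ^ 2) →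
        (∀ X ∈ SΓ, |⟪X - F, nbar⟫| ≤ D * h ^ 2) →
      ∀ p : V3 → ℝ, IsQ1 p →
        Real.sqrt (∫ X in SΓ, (CT βm βp F nbar p X - p X) ^ 2 ∂μH[2]) ≤
          C * Real.sqrt A * D * (Real.sqrt βp / βm) * (h * Real.sqrt h) *
            Real.sqrt (βm * (∫ X in Tm, ‖fderiv ℝ p X‖ ^ 2) +
              βp * ∫ X in Tp, ‖fderiv ℝ (CT βm βp F nbar p) X‖ ^ 2) := by
  refine ⟨Real.sqrt (900 / γ), Real.sqrt_pos.2 (by positivity), ?_⟩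
  intro A D hA hD h hh Tm Tp hTm hTp _ hunion F n hn βm βp hβm hβ ⟨P, hP, hPT, hvol, hF⟩
    SΓ hSΓ _ hSA hSD p hp
  have hβp : 0 < βp := hβm.trans_le hβ
  set g := fderiv ℝ p F n with hg
  set Im := ∫ X in Tm, ‖fderiv ℝ p X‖ ^ 2 with hIm
  set Ip := ∫ X in Tp, ‖fderiv ℝ (CT βm βp F n p) X‖ ^ 2 with hIp
  have hIm0 : 0 ≤ Im := integral_nonneg fun _ => sq_nonneg _
  have hIp0 : 0 ≤ Ip := integral_nonneg fun _ => sq_nonneg _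
  have henergy : g ^ 2 * (γ * h ^ 3) ≤ 900 * (βp / βm ^ 2 * (βm * Im + βp * Ip)) := by
    have hexp : βp / βm ^ 2 * (βm * Im + βp * Ip) = βp / βm * Im + (βp / βm) ^ 2 * Ip := by
      field_simp
    rw [hexp]
    have hr : 1 ≤ βp / βm := (one_le_div hβm).2 hβ
    rcases hPT with hPm | hPp
    · have key := hp.normal_deriv_sq_le hn (hunion ▸ Set.subset_union_left) hP hPm hvol hF
      have h1 : Im ≤ βp / βm * Im := le_mul_of_one_le_left hIm0 hr
      have h2 : 0 ≤ (βp / βm) ^ 2 * Ip := by positivity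
      linarith
    · have key := (hp.CT βm βp F n).normal_deriv_sq_le hn
        (hunion ▸ Set.subset_union_right) hP hPp hvol hF
      rw [fderiv_CT_apply hp.differentiable βm βp F hn, ← hg] at key
      have h1 : 0 ≤ βp / βm * Im := by positivity
      have h2 : g ^ 2 * (γ * h ^ 3)
          = (βp / βm) ^ 2 * ((βm / βp * g) ^ 2 * (γ * h ^ 3)) := by
        field_simp
      have h3 := mul_le_mul_of_nonneg_left key (sq_nonneg (βp / βm))
      linarith
  have hjump : ∫ X in SΓ, (CT βm βp F n p X - p X) ^ 2 ∂μH[2]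
      ≤ g ^ 2 * (D * h ^ 2) ^ 2 * (A * h ^ 2) := by
    have hfin : (μH[2] : Measure V3) SΓ < ⊤ := hSA.trans_lt ENNReal.ofReal_lt_top
    have hb : ∀ X ∈ SΓ, ‖(CT βm βp F n p X - p X) ^ 2‖ ≤ g ^ 2 * (D * h ^ 2) ^ 2 := by
      intro X hX
      have hr1 : βm / βp ≤ 1 := (div_le_one hβp).2 hβ
      have hr0 : 0 < βm / βp := by positivity
      have e : (CT βm βp F n p X - p X) ^ 2
          = (βm / βp - 1) ^ 2 * (g ^ 2 * ⟪X - F, n⟫ ^ 2) := by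
        rw [CT, ← hg]
        ring
      have h1 : (βm / βp - 1) ^ 2 ≤ 1 := by nlinarith
      have h2 : ⟪X - F, n⟫ ^ 2 ≤ (D * h ^ 2) ^ 2 :=
        sq_le_sq' (abs_le.1 (hSD X hX)).1 (abs_le.1 (hSD X hX)).2
      rw [Real.norm_of_nonneg (sq_nonneg _), e]
      calc _ ≤ 1 * (g ^ 2 * (D * h ^ 2) ^ 2) := by gcongr
        _ = _ := one_mul _
    have := (le_abs_self _).trans (norm_setIntegral_le_of_norm_le_const hfin hb)
    refine this.trans (mul_le_mul_of_nonneg_left ?_ (by positivity))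
    exact ENNReal.toReal_le_of_le_ofReal (by positivity) hSA
  refine Real.sqrt_le_iff.2 ⟨by positivity, hjump.trans ?_⟩
  have hE0 : 0 ≤ βm * Im + βp * Ip := by positivity
  simp only [mul_pow _ (Real.sqrt (βm * Im + βp * Ip)), mul_pow _ (h * Real.sqrt h),
    mul_pow _ (Real.sqrt βp / βm), mul_pow _ D, mul_pow _ (Real.sqrt A), mul_pow h (Real.sqrt h)]
  rw [div_pow, Real.sq_sqrt (by positivity),
    Real.sq_sqrt hA.le, Real.sq_sqrt hβp.le, Real.sq_sqrt hh.le, Real.sq_sqrt hE0]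
  have hfac : 0 ≤ D ^ 2 * A * h ^ 3 / γ := by positivity
  calc g ^ 2 * (D * h ^ 2) ^ 2 * (A * h ^ 2)
      = D ^ 2 * A * h ^ 3 / γ * (g ^ 2 * (γ * h ^ 3)) := by field_simp
    _ ≤ D ^ 2 * A * h ^ 3 / γ * (900 * (βp / βm ^ 2 * (βm * Im + βp * Ip))) := by gcongr
    _ = _ := by field_simp
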